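/- Let b ≥ 2 and α ≥ 2 be integers. Then Σ_{k=1}^{∞} b^{−μ_α(k)} = Σ_{v=1}^{α−1} ∏_{i=1}^{v} (b−1)/(b^{i}−1) + ((b^{α}−1)/(b^{α}−b)) ∏_{i=1}^{α} (b−1)/(b^{i}−1). In particular, if z ∈ G has some digits ζ_1 = ⋯ = ζ_n and ζ_{n+1} = ζ_{n+2} = ⋯ = 0 with ζ_1 = ⋯ = ζ_n = 0, then χ_b(Φ_b(z)) = Σ_{k=1}^{∞} b^{−μ_α(k)} equals this value. -/

import Mathlib

namespace QMC

/-- the `i`-th `b`-adic digit of `k`. -/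
def digit (b k i : ℕ) : ℕ := k / b ^ i % b

/-- the `k`-th character `W_k` on `G = (ℤ/bℤ)^ℕ`, where `z i = ζ_{i+1}`. -/
noncomputable def W (b k : ℕ) (z : ℕ → ZMod b) : ℂ :=
  Complex.exp (2 * Real.pi * Complex.I / b) ^
    ∑ i ∈ Finset.range (k + 1), digit b k i * (z i).val

/-- `μ_α(k) = a₁ + ⋯ + a_{min(v,α)}`, the sum of the `α` largest positions (counted
from `1`) of nonzero `b`-adic digits of `k`; `μ_α(0) = 0`. -/
def mualpha (b α k : ℕ) : ℕ :=
  (((((Finset.range (k + 1)).filter fun i => digit b k i ≠ 0).sort (· ≤ ·)).reverse.take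
    α).map (· + 1)).sum

/-- `χ_b(z) = Σ_{k ≥ 1} b^{-μ_α(k)} W_k(z)`. -/
noncomputable def chi (b α : ℕ) (z : ℕ → ZMod b) : ℂ :=
  ∑' k : ℕ, ((b : ℂ) ^ mualpha b α (k + 1))⁻¹ * W b (k + 1) z

/-- the `b`-adic tent transformation `Φ_b : G → G`. -/
def tent (b : ℕ) (z : ℕ → ZMod b) : ℕ → ZMod b := fun i => z (i + 1) - z 0

/-!
Cut the sum over `k` at `k < b ^ m`. If `k = d * b ^ m + r` with leading digit `0 < d < b` and
`r < b ^ m`, then `μ_{α+1}(k) = (m + 1) + μ_α(r)`. Hence, for an arbitrary weight `x` in place of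
`b⁻¹`, the sums `S_α(m) = ∑_{k < b ^ m} x ^ μ_α(k)` satisfy
`S_{α+1}(m + 1) = S_{α+1}(m) + (b - 1) x ^ (m + 1) S_α(m)`, and the series
`R_β(j) = ∑_m (b - 1) x ^ (j (m + 1)) S_β(m)` satisfy `(1 - x ^ j) R_{β+1}(j) =
(b - 1) x ^ j (1 + R_β(j + 1))`, starting from the geometric series `R_0(j)`. The sum over all `k`
is `1 + R_{α-1}(1)`; unrolling the recursion gives the closed form, and `x = b⁻¹` the theorem.
-/

open Filter Topology Finset

theorem reverse_sort_le {ι : Type*} [LinearOrder ι] (s : Finset ι) :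
    (s.sort (· ≤ ·)).reverse = s.sort (· ≥ ·) := by
  refine List.Perm.eq_of_pairwise' (r := (· ≥ ·)) ?_ (s.pairwise_sort _) ?_
  · exact List.pairwise_reverse.2 (s.pairwise_sort _)
  · exact (List.reverse_perm _).trans
      ((s.sort_perm_toList _).trans (s.sort_perm_toList _).symm)

theorem sum_range_mul_eq_sum_sum {M : Type*} [AddCommMonoid M] (f : ℕ → M) (c n : ℕ) :
    ∑ k ∈ range (c * n), f k = ∑ d ∈ range c, ∑ r ∈ range n, f (d * n + r) := by
  induction c with
  | zero => simp
  | succ c ih => rw [Nat.succ_mul, sum_range_add, sum_range_succ, ih]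

theorem summable_of_succ_le_mul_add {u v : ℕ → ℝ} {q : ℝ} (hu : ∀ m, 0 ≤ u m)
    (hv : ∀ m, 0 ≤ v m) (hq : q < 1) (hvs : Summable v)
    (hrec : ∀ m, u (m + 1) ≤ q * u m + v m) : Summable u := by
  refine summable_of_sum_range_le (c := (u 0 + ∑' m, v m) / (1 - q)) hu fun n => ?_
  have hshift : ∑ m ∈ range (n + 1), u m ≤
      q * ∑ m ∈ range n, u m + ∑ m ∈ range n, v m + u 0 := by
    rw [sum_range_succ', mul_sum, ← sum_add_distrib]
    gcongr with m
    exact hrec m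
  have hpartial : ∑ m ∈ range n, v m ≤ ∑' m, v m := hvs.sum_le_tsum _ fun m _ => hv m
  rw [sum_range_succ] at hshift
  rw [le_div_iff₀ (sub_pos.2 hq)]
  linarith [hu n]

theorem hasSum_of_succ_eq_mul_add {𝕜 : Type*} [Field 𝕜] [TopologicalSpace 𝕜]
    [IsTopologicalRing 𝕜] [T2Space 𝕜] {f g : ℕ → 𝕜} {y G : 𝕜} (hy : y ≠ 1)
    (hf : Summable f) (hg : HasSum g G) (hrec : ∀ m, f (m + 1) = y * f m + g m) :
    HasSum f ((f 0 + G) / (1 - y)) := by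
  have hshift : ∑' m, f (m + 1) = y * ∑' m, f m + G := by
    simp only [hrec]
    exact ((hf.hasSum.mul_left y).add hg).tsum_eq
  have hsplit : ∑' m, f m = f 0 + (y * ∑' m, f m + G) := hshift ▸ hf.tsum_eq_zero_add
  have htsum : ∑' m, f m = (f 0 + G) / (1 - y) := by
    rw [eq_div_iff (sub_ne_zero.2 hy.symm)]
    linear_combination hsplit
  exact htsum ▸ hf.hasSum

theorem hasSum_of_nonneg_of_tendsto_sum_range_comp {f : ℕ → ℝ} {φ : ℕ → ℕ} {a : ℝ}
    (hf : ∀ k, 0 ≤ f k) (hφ : Tendsto φ atTop atTop)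
    (h : Tendsto (fun m => ∑ k ∈ range (φ m), f k) atTop (𝓝 a)) : HasSum f a := by
  have hmono : Monotone fun n => ∑ k ∈ range n, f k := fun _ _ hmn =>
    sum_le_sum_of_subset_of_nonneg (range_mono hmn) fun k _ _ => hf k
  exact (hasSum_iff_tendsto_nat_of_nonneg hf a).2
    ((tendsto_iff_tendsto_subseq_of_monotone hmono hφ).2 h)

section Digits

variable {b d k m r i : ℕ}

theorem digit_eq_zero_of_lt_pow (hk : k < b ^ i) : digit b k i = 0 := by
  rw [digit, Nat.div_eq_of_lt hk, Nat.zero_mod]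

theorem digit_mul_pow_add_self (hdb : d < b) (hr : r < b ^ m) :
    digit b (d * b ^ m + r) m = d := by
  rw [digit, mul_comm, Nat.mul_add_div (by omega), Nat.div_eq_of_lt hr, add_zero,
    Nat.mod_eq_of_lt hdb]

theorem digit_mul_pow_add_of_lt (hi : i < m) : digit b (d * b ^ m + r) i = digit b r i := by
  have hdvd : b ^ i * b ∣ d * b ^ m := pow_succ b i ▸ (pow_dvd_pow b hi).mul_left d
  rw [digit, digit, ← Nat.mod_mul_right_div_self, ← Nat.mod_mul_right_div_self,
    Nat.add_mod, Nat.mod_eq_zero_of_dvd hdvd, zero_add, Nat.mod_mod]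

/-- The positions, counted from `0`, of the nonzero `b`-adic digits of `k`; these are the
`a_i - 1` of the expansion `k = κ_1 b^{a_1 - 1} + ⋯ + κ_v b^{a_v - 1}`. -/
def digitSupport (b k : ℕ) : Finset ℕ := {i ∈ range (k + 1) | digit b k i ≠ 0}

theorem mem_digitSupport (hb : 1 < b) : i ∈ digitSupport b k ↔ digit b k i ≠ 0 := by
  refine ⟨fun hi => (mem_filter.1 hi).2, fun hi => mem_filter.2 ⟨mem_range.2 ?_, hi⟩⟩
  by_contra! hki
  exact hi (digit_eq_zero_of_lt_pow (((Nat.lt_succ_self k).trans_le hki).trans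
    (Nat.lt_pow_self hb)))

theorem lt_of_mem_digitSupport (hb : 1 < b) (hk : k < b ^ m) (hi : i ∈ digitSupport b k) :
    i < m := by
  by_contra! hmi
  exact (mem_digitSupport hb).1 hi
    (digit_eq_zero_of_lt_pow (hk.trans_le (Nat.pow_le_pow_right hb.le hmi)))

theorem mul_pow_add_lt_pow_succ (hdb : d < b) (hr : r < b ^ m) :
    d * b ^ m + r < b ^ (m + 1) :=
  calc d * b ^ m + r < (d + 1) * b ^ m := by rw [add_one_mul]; gcongr
    _ ≤ b * b ^ m := Nat.mul_le_mul_right _ hdb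
    _ = b ^ (m + 1) := (pow_succ' b m).symm

theorem digitSupport_mul_pow_add (hd : 0 < d) (hdb : d < b) (hr : r < b ^ m) :
    digitSupport b (d * b ^ m + r) = insert m (digitSupport b r) := by
  have hb : 1 < b := by omega
  ext i
  rw [mem_insert]
  rcases lt_trichotomy i m with hlt | rfl | hgt
  · rw [mem_digitSupport hb, mem_digitSupport hb, digit_mul_pow_add_of_lt hlt,
      or_iff_right hlt.ne]
  · rw [mem_digitSupport hb, digit_mul_pow_add_self hdb hr]
    simp [hd.ne']
  · refine iff_of_false (fun hi => ?_) (not_or.2 ⟨hgt.ne', fun hi => ?_⟩)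
    · exact absurd (lt_of_mem_digitSupport hb (mul_pow_add_lt_pow_succ hdb hr) hi) (by omega)
    · exact absurd (lt_of_mem_digitSupport hb hr hi) hgt.not_gt

theorem mualpha_eq_sum_take_sort_ge (b α k : ℕ) :
    mualpha b α k = ((((digitSupport b k).sort (· ≥ ·)).take α).map (· + 1)).sum := by
  rw [← reverse_sort_le]
  rfl

theorem mualpha_zero_left (b k : ℕ) : mualpha b 0 k = 0 := by
  simp [mualpha]

theorem mualpha_zero_right (b α : ℕ) : mualpha b α 0 = 0 := by
  simp [mualpha, digit]

theorem mualpha_succ_mul_pow_add (α : ℕ) (hd : 0 < d) (hdb : d < b) (hr : r < b ^ m) :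
    mualpha b (α + 1) (d * b ^ m + r) = (m + 1) + mualpha b α r := by
  have hlt : ∀ i ∈ digitSupport b r, i < m := fun i hi =>
    lt_of_mem_digitSupport (by omega) hr hi
  rw [mualpha_eq_sum_take_sort_ge, mualpha_eq_sum_take_sort_ge,
    digitSupport_mul_pow_add hd hdb hr,
    sort_insert _ (fun i hi => (hlt i hi).le) fun hm => (hlt m hm).false,
    List.take_succ_cons, List.map_cons, List.sum_cons]

end Digits

section PowSum

variable {R : Type*} [CommRing R] {b : ℕ}

/-- The truncated sum `S_α(m) = ∑_{k < b ^ m} x ^ μ_α(k)`. The weight `x` replaces `b⁻¹`. -/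
def powSum (b α : ℕ) (x : R) (m : ℕ) : R := ∑ k ∈ range (b ^ m), x ^ mualpha b α k

theorem powSum_zero_left (b : ℕ) (x : R) (m : ℕ) : powSum b 0 x m = (b : R) ^ m := by
  simp [powSum, mualpha_zero_left]

theorem powSum_zero_right (b α : ℕ) (x : R) : powSum b α x 0 = 1 := by
  simp [powSum, mualpha_zero_right]

theorem powSum_succ_succ (hb : 0 < b) (α : ℕ) (x : R) (m : ℕ) :
    powSum b (α + 1) x (m + 1) =
      powSum b (α + 1) x m + (b - 1) * x ^ (m + 1) * powSum b α x m := by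
  obtain ⟨c, rfl⟩ := Nat.exists_eq_add_of_lt hb
  rw [zero_add]
  have hblock : ∀ d ∈ range c,
      ∑ r ∈ range ((c + 1) ^ m), x ^ mualpha (c + 1) (α + 1) ((d + 1) * (c + 1) ^ m + r) =
        x ^ (m + 1) * powSum (c + 1) α x m := by
    intro d hd
    rw [powSum, mul_sum]
    refine sum_congr rfl fun r hr => ?_
    rw [mualpha_succ_mul_pow_add α d.succ_pos (Nat.succ_lt_succ (mem_range.1 hd))
      (mem_range.1 hr), pow_add]
  calc powSum (c + 1) (α + 1) x (m + 1)
      = ∑ d ∈ range (c + 1), ∑ r ∈ range ((c + 1) ^ m),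
          x ^ mualpha (c + 1) (α + 1) (d * (c + 1) ^ m + r) := by
        rw [powSum, pow_succ', sum_range_mul_eq_sum_sum]
    _ = c * (x ^ (m + 1) * powSum (c + 1) α x m) + powSum (c + 1) (α + 1) x m := by
        rw [sum_range_succ', sum_congr rfl hblock, sum_const, card_range, nsmul_eq_mul]
        simp only [zero_mul, zero_add, powSum]
    _ = _ := by push_cast; ring

/-- The `m`-th term of the series `R_β(j) = ∑_m (b - 1) x ^ (j (m + 1)) S_β(m)`. It is the
contribution of the `k` with leading digit at position `m + 1`, that position being counted with
multiplicity `j` and the lower digits through `μ_β`. -/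
def leadTerm (b β j : ℕ) (x : R) (m : ℕ) : R :=
  (b - 1) * x ^ (j * (m + 1)) * powSum b β x m

theorem leadTerm_zero_left (b j : ℕ) (x : R) (m : ℕ) :
    leadTerm b 0 j x m = (b - 1) * x ^ j * (b * x ^ j) ^ m := by
  rw [leadTerm, powSum_zero_left]
  ring

theorem leadTerm_zero_right (b β j : ℕ) (x : R) : leadTerm b β j x 0 = (b - 1) * x ^ j := by
  simp [leadTerm, powSum_zero_right]

theorem leadTerm_succ_succ (hb : 0 < b) (β j : ℕ) (x : R) (m : ℕ) :
    leadTerm b (β + 1) j x (m + 1) =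
      x ^ j * leadTerm b (β + 1) j x m + (b - 1) * x ^ j * leadTerm b β (j + 1) x m := by
  simp only [leadTerm, powSum_succ_succ hb]
  ring

theorem powSum_succ_eq_one_add_sum (hb : 0 < b) (α : ℕ) (x : R) (n : ℕ) :
    powSum b (α + 1) x n = 1 + ∑ m ∈ range n, leadTerm b α 1 x m := by
  rw [eq_sum_range_sub (powSum b (α + 1) x), powSum_zero_right]
  simp only [powSum_succ_succ hb, leadTerm, one_mul, add_sub_cancel_left]

end PowSum

section LeadSum

variable {K : Type*} [Field K]

/-- The closed form of the series `R_β(j) = ∑_m leadTerm b β j x m`, as a Horner scheme. -/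
def leadSum (b : ℕ) (x : K) : ℕ → ℕ → K
  | 0, j => (b - 1) * x ^ j / (1 - b * x ^ j)
  | β + 1, j => (b - 1) * x ^ j / (1 - x ^ j) * (1 + leadSum b x β (j + 1))

theorem leadSum_one_eq_sum_prod_add (b : ℕ) (x : K) (n β : ℕ) :
    leadSum b x (n + β) 1 =
      ∑ v ∈ Icc 1 n, ∏ i ∈ Icc 1 v, (b - 1) * x ^ i / (1 - x ^ i) +
        (∏ i ∈ Icc 1 n, (b - 1) * x ^ i / (1 - x ^ i)) * leadSum b x β (n + 1) := by
  induction n generalizing β with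
  | zero => simp
  | succ n ih =>
    rw [add_right_comm, add_assoc, ih, sum_Icc_succ_top n.succ_pos, prod_Icc_succ_top n.succ_pos,
      leadSum]
    ring

end LeadSum

section Convergence

variable {𝕜 : Type*} [NormedField 𝕜] {b : ℕ} {x : 𝕜}

theorem one_sub_pow_ne_zero (hx : ‖x‖ < 1) {j : ℕ} (hj : j ≠ 0) : 1 - x ^ j ≠ 0 := by
  refine sub_ne_zero.2 fun h => (pow_lt_one₀ (norm_nonneg x) hx hj).ne ?_
  rw [← norm_pow, ← h, norm_one]

theorem norm_natCast_mul_pow_lt_one {j : ℕ} (hbx : b * ‖x‖ ^ j < 1) : ‖(b : 𝕜) * x ^ j‖ < 1 :=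
  calc ‖(b : 𝕜) * x ^ j‖ = ‖(b : 𝕜)‖ * ‖x‖ ^ j := by rw [norm_mul, norm_pow]
    _ ≤ b * ‖x‖ ^ j := by gcongr; simpa using Nat.norm_cast_le (α := 𝕜) b
    _ < 1 := hbx

theorem summable_norm_leadTerm (hb : 0 < b) (hx : ‖x‖ < 1) {β j : ℕ} (hj : j ≠ 0)
    (hbx : b * ‖x‖ ^ (j + β) < 1) : Summable fun m => ‖leadTerm b β j x m‖ := by
  induction β generalizing j with
  | zero =>
    simp only [leadTerm_zero_left, norm_mul ((b - 1 : 𝕜) * x ^ j)]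
    exact (summable_norm_geometric_of_norm_lt_one (norm_natCast_mul_pow_lt_one hbx)).mul_left _
  | succ β ih =>
    have hlower := ih j.succ_ne_zero (by rwa [Nat.succ_add_eq_add_succ])
    refine summable_of_succ_le_mul_add (fun m => norm_nonneg _)
      (fun m => by positivity) (pow_lt_one₀ (norm_nonneg x) hx hj)
      (hlower.mul_left ‖((b : 𝕜) - 1) * x ^ j‖) fun m => ?_
    rw [leadTerm_succ_succ hb, ← norm_pow, ← norm_mul, ← norm_mul]
    exact norm_add_le _ _

variable [CompleteSpace 𝕜]

theorem hasSum_leadTerm (hb : 0 < b) (hx : ‖x‖ < 1) {β j : ℕ} (hj : j ≠ 0)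
    (hbx : b * ‖x‖ ^ (j + β) < 1) :
    HasSum (leadTerm b β j x) (leadSum b x β j) := by
  induction β generalizing j with
  | zero =>
    rw [leadSum, div_eq_mul_inv, funext (leadTerm_zero_left b j x)]
    exact (hasSum_geometric_of_norm_lt_one (norm_natCast_mul_pow_lt_one hbx)).mul_left _
  | succ β ih =>
    have hlower := ih j.succ_ne_zero (by rwa [Nat.succ_add_eq_add_succ])
    convert hasSum_of_succ_eq_mul_add (sub_ne_zero.1 (one_sub_pow_ne_zero hx hj)).symm
      (summable_norm_leadTerm hb hx hj hbx).of_norm (hlower.mul_left ((b - 1) * x ^ j))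
      (leadTerm_succ_succ hb β j x) using 1
    rw [leadSum, leadTerm_zero_right]
    ring

theorem tendsto_powSum (hb : 0 < b) (hx : ‖x‖ < 1) {α : ℕ} (hbx : b * ‖x‖ ^ (α + 1) < 1) :
    Tendsto (powSum b (α + 1) x) atTop (𝓝 (1 + leadSum b x α 1)) := by
  rw [funext (powSum_succ_eq_one_add_sum hb α x)]
  exact (hasSum_leadTerm hb hx one_ne_zero (by rwa [add_comm])).tendsto_sum_nat.const_add 1

theorem summable_pow_mualpha (hb : 1 < b) (hx : ‖x‖ < 1) {α : ℕ}
    (hbx : b * ‖x‖ ^ (α + 1) < 1) : Summable fun k => x ^ mualpha b (α + 1) k := by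
  -- The cuts `k < b ^ m` are only a subsequence of the partial sums, which suffices for the
  -- nonnegative weight `‖x‖`.
  refine Summable.of_norm ?_
  simp only [norm_pow]
  exact (hasSum_of_nonneg_of_tendsto_sum_range_comp (fun k => by positivity)
    (tendsto_pow_atTop_atTop_of_one_lt hb)
    (tendsto_powSum hb.pos (by rwa [norm_norm]) (by rwa [norm_norm]))).summable

theorem hasSum_pow_mualpha (hb : 1 < b) (hx : ‖x‖ < 1) {α : ℕ}
    (hbx : b * ‖x‖ ^ (α + 1) < 1) :
    HasSum (fun k => x ^ mualpha b (α + 1) k) (1 + leadSum b x α 1) := by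
  have hsummable := summable_pow_mualpha hb hx hbx
  have hcut : Tendsto (powSum b (α + 1) x) atTop (𝓝 (∑' k, x ^ mualpha b (α + 1) k)) :=
    hsummable.hasSum.tendsto_sum_nat.comp (tendsto_pow_atTop_atTop_of_one_lt hb)
  exact tendsto_nhds_unique hcut (tendsto_powSum hb.pos hx hbx) ▸ hsummable.hasSum

theorem sum_pow_neg_mualpha_general (hb : 1 < b) (hx : ‖x‖ < 1) {α : ℕ}
    (hbx : b * ‖x‖ ^ α < 1) :
    HasSum (fun k => x ^ mualpha b α (k + 1))
      (∑ v ∈ Icc 1 (α - 1), ∏ i ∈ Icc 1 v, (b - 1) * x ^ i / (1 - x ^ i) +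
        (1 - x ^ α) / (1 - b * x ^ α) * ∏ i ∈ Icc 1 α, (b - 1) * x ^ i / (1 - x ^ i)) := by
  obtain _ | n := α
  · exact absurd hbx (by simpa using hb.ne_bot)
  have hlast : (1 - x ^ (n + 1)) / (1 - b * x ^ (n + 1)) *
      ((b - 1) * x ^ (n + 1) / (1 - x ^ (n + 1))) = leadSum b x 0 (n + 1) := by
    rw [leadSum, mul_comm, div_mul_div_cancel₀ (one_sub_pow_ne_zero hx n.succ_ne_zero)]
  have hall := hasSum_pow_mualpha hb hx hbx
  rw [← hasSum_nat_add_iff' 1, sum_range_one, mualpha_zero_right, pow_zero,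
    add_sub_cancel_left] at hall
  rw [Nat.add_sub_cancel, prod_Icc_succ_top n.succ_pos, mul_left_comm, hlast,
    ← leadSum_one_eq_sum_prod_add, add_zero]
  exact hall

end Convergence

theorem tsum_inv_pow_mualpha {𝕜 : Type*} [RCLike 𝕜] {b α : ℕ} (hb : 1 < b) (hα : 1 < α) :
    ∑' k : ℕ, ((b : 𝕜) ^ mualpha b α (k + 1))⁻¹ =
      ∑ v ∈ Icc 1 (α - 1), ∏ i ∈ Icc 1 v, ((b : 𝕜) - 1) / ((b : 𝕜) ^ i - 1) +
        ((b : 𝕜) ^ α - 1) / ((b : 𝕜) ^ α - b) *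
          ∏ i ∈ Icc 1 α, ((b : 𝕜) - 1) / ((b : 𝕜) ^ i - 1) := by
  have hb₀ : (b : 𝕜) ≠ 0 := Nat.cast_ne_zero.2 hb.ne_bot
  have hb₁ : (1 : ℝ) < b := Nat.one_lt_cast.2 hb
  have hnorm : ‖(b : 𝕜)⁻¹‖ = (b : ℝ)⁻¹ := by rw [norm_inv, RCLike.norm_natCast]
  have hfactor (i : ℕ) : ((b : 𝕜) - 1) * (b : 𝕜)⁻¹ ^ i / (1 - (b : 𝕜)⁻¹ ^ i) =
      (b - 1) / (b ^ i - 1) := by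
    rw [← mul_div_mul_right _ _ (pow_ne_zero i hb₀)]
    simp [sub_mul, hb₀]
  have hlast : (1 - (b : 𝕜)⁻¹ ^ α) / (1 - b * (b : 𝕜)⁻¹ ^ α) = (b ^ α - 1) / (b ^ α - b) := by
    rw [← mul_div_mul_right _ _ (pow_ne_zero α hb₀)]
    simp [sub_mul, hb₀]
  have hbx : b * ‖(b : 𝕜)⁻¹‖ ^ α < 1 := by
    rw [hnorm, inv_pow, ← div_eq_mul_inv, div_lt_one (by positivity)]
    exact lt_self_pow₀ hb₁ hα
  have hsum := sum_pow_neg_mualpha_general hb (hnorm ▸ inv_lt_one_of_one_lt₀ hb₁) hbx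
  simp only [hfactor, hlast] at hsum
  simp only [inv_pow] at hsum
  exact hsum.tsum_eq

theorem tent_eq_zero {b : ℕ} {z : ℕ → ZMod b} (hz : ∀ i, z i = z 0) : tent b z = 0 :=
  funext fun i => sub_eq_zero.2 (hz (i + 1))

theorem W_zero_right (b k : ℕ) : W b k 0 = 1 := by
  simp [W]

theorem chi_zero_right (b α : ℕ) : chi b α 0 = ∑' k : ℕ, ((b : ℂ) ^ mualpha b α (k + 1))⁻¹ := by
  simp only [chi, W_zero_right, mul_one]

/-- `Σ_{k ≥ 1} b^{-μ_α(k)}` in closed form; in particular this is the value of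
`χ_b(Φ_b(z))` for `z` all of whose digits vanish. -/
theorem sum_pow_neg_mualpha (b α : ℕ) (hb : 2 ≤ b) (hα : 2 ≤ α) :
    (∑' k : ℕ, ((b : ℝ) ^ mualpha b α (k + 1))⁻¹ =
      ∑ v ∈ Finset.Icc 1 (α - 1), ∏ i ∈ Finset.Icc 1 v,
          ((b : ℝ) - 1) / ((b : ℝ) ^ i - 1) +
        (((b : ℝ) ^ α - 1) / ((b : ℝ) ^ α - b)) *
          ∏ i ∈ Finset.Icc 1 α, ((b : ℝ) - 1) / ((b : ℝ) ^ i - 1)) ∧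
    ∀ z : ℕ → ZMod b, (∀ i, z i = 0) →
      chi b α (tent b z) =
        ((∑ v ∈ Finset.Icc 1 (α - 1), ∏ i ∈ Finset.Icc 1 v,
            ((b : ℝ) - 1) / ((b : ℝ) ^ i - 1) +
          (((b : ℝ) ^ α - 1) / ((b : ℝ) ^ α - b)) *
            ∏ i ∈ Finset.Icc 1 α, ((b : ℝ) - 1) / ((b : ℝ) ^ i - 1) : ℝ) : ℂ) := by
  refine ⟨tsum_inv_pow_mualpha hb hα, fun z hz => ?_⟩
  rw [tent_eq_zero fun i => (hz i).trans (hz 0).symm, chi_zero_right, tsum_inv_pow_mualpha hb hα]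
  push_cast
  rfl

end QMC
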